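/- arXiv:0907.0109 — 5 statements merged into one kernel-verified Lean document; each statement's English description precedes it below -/
import Mathlib

section
/- Let B be the open ball of center p and radius η > 0 in ℝ³, let D be a nonempty bounded open subset of ℝ³, and let Ω be a bounded open subset of ℝ³ such that the closure of D is contained in Ω and the closures of B and Ω are disjoint. Then 2·dist(D,B) − dist(Ω,B) ≥ l(∂B,∂D,∂Ω), where l(∂B,∂D,∂Ω) = inf{ ‖x−y‖ + ‖y−z‖ : x ∈ ∂B, y ∈ ∂D, z ∈ ∂Ω }. -/
/-!
The point `y` of `closure D` nearest to the centre `p` lies on `∂D`, and the segment from `y`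
to `p` meets `∂B` at a point `x` with `‖x - y‖ = dist(D, B)`. As `y ∈ closure D ⊆ Ω` while
`x ∉ Ω`, the segment `[x, y]` crosses `∂Ω` at some `z`. Collinearity gives
`‖x - y‖ + ‖y - z‖ = 2 ‖x - y‖ - ‖x - z‖`, and `‖x - z‖ ≥ dist(Ω, B)` because `x` and `z` lie in
the closures of `B` and `Ω` (`setDist_le_of_mem_closure`). The broken path `x, y, z` therefore has
length at most `2 dist(D, B) - dist(Ω, B)`.
-/

open Metric

/-- Distance between two subsets of ℝ³: `inf {‖x - y‖ : x ∈ A, y ∈ S}`. -/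
noncomputable def setDist (A S : Set (EuclideanSpace ℝ (Fin 3))) : ℝ :=
  sInf {d : ℝ | ∃ x ∈ A, ∃ y ∈ S, d = ‖x - y‖}

/-- The inequality passes from the two sets to their closures by continuity of the norm. -/
lemma setDist_le_of_mem_closure {A S : Set (EuclideanSpace ℝ (Fin 3))}
    {a s : EuclideanSpace ℝ (Fin 3)} (ha : a ∈ closure A) (hs : s ∈ closure S) :
    setDist A S ≤ ‖a - s‖ := by
  have hcont : Continuous (Function.uncurry
      fun a s : EuclideanSpace ℝ (Fin 3) => ‖a - s‖) := by
    unfold Function.uncurry; fun_prop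
  have h : ‖a - s‖ ∈ closure (Set.Ici (setDist A S)) := by
    refine map_mem_closure₂ (f := fun a s : EuclideanSpace ℝ (Fin 3) => ‖a - s‖) hcont ha hs ?_
    intro x hx y hy
    rw [Set.mem_Ici, setDist]
    refine csInf_le ⟨0, ?_⟩ ⟨x, hx, y, hy, rfl⟩
    rintro _ ⟨u, -, v, -, rfl⟩
    exact norm_nonneg _
  rwa [isClosed_Ici.closure_eq] at h

/-- Proposition 1.1: `2 dist(D,B) - dist(Ω,B) ≥ l(∂B, ∂D, ∂Ω)`. -/
theorem two_dist_sub_dist_ge_broken_path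
    (p : EuclideanSpace ℝ (Fin 3)) (η : ℝ) (hη : 0 < η)
    (D Ω : Set (EuclideanSpace ℝ (Fin 3)))
    (hDne : D.Nonempty) (hDopen : IsOpen D) (hDbdd : Bornology.IsBounded D)
    (hΩopen : IsOpen Ω) (hΩbdd : Bornology.IsBounded Ω)
    (hDΩ : closure D ⊆ Ω)
    (hdisj : closure (ball p η) ∩ closure Ω = ∅) :
    sInf {d : ℝ | ∃ x ∈ frontier (ball p η), ∃ y ∈ frontier D, ∃ z ∈ frontier Ω,
        d = ‖x - y‖ + ‖y - z‖}
      ≤ 2 * setDist D (ball p η) - setDist Ω (ball p η) := by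
  have hout : ∀ w ∈ closure (ball p η), w ∉ closure Ω := fun w hw hw' =>
    (Set.eq_empty_iff_forall_notMem.1 hdisj w) ⟨hw, hw'⟩
  have hpD : p ∉ D := fun h => hout p (subset_closure (mem_ball_self hη))
    (subset_closure (hDΩ (subset_closure h)))
  obtain ⟨y, hyD, hy⟩ := exists_mem_frontier_infDist_compl_eq_dist
    (x := p) (s := Dᶜ) hpD (by simpa [Set.compl_univ_iff] using hDne.ne_empty)
  rw [frontier_compl] at hyD
  rw [compl_compl] at hy
  have hyΩ : y ∈ Ω := hDΩ (frontier_subset_closure hyD)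
  have hηR : η < ‖y - p‖ := by
    by_contra! h
    refine hout y ?_ (subset_closure hyΩ)
    rwa [closure_ball p hη.ne', mem_closedBall, dist_eq_norm]
  have hR : 0 < ‖y - p‖ := hη.trans hηR
  set x := p + (η / ‖y - p‖) • (y - p) with hx
  have hxB : x ∈ frontier (ball p η) := by
    rw [frontier_ball p hη.ne', mem_sphere, dist_eq_norm, hx, add_sub_cancel_left, norm_smul,
      Real.norm_of_nonneg (by positivity), div_mul_cancel₀ _ hR.ne']
  have hxcl : x ∈ closure (ball p η) := frontier_subset_closure hxB
  have hxy : ‖x - y‖ = ‖y - p‖ - η := by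
    have h1 : x - y = (η / ‖y - p‖ - 1) • (y - p) := by rw [hx]; module
    rw [h1, norm_smul, Real.norm_of_nonpos (by rw [sub_nonpos, div_le_one hR]; exact hηR.le)]
    field_simp
    ring
  have hD : ‖x - y‖ ≤ setDist D (ball p η) := by
    obtain ⟨q, hq⟩ := hDne
    refine le_csInf ⟨_, q, hq, p, mem_ball_self hη, rfl⟩ ?_
    rintro _ ⟨u, hu, v, hv, rfl⟩
    have h1 := infDist_le_dist_of_mem (x := p) hu
    have h2 := dist_triangle p v u
    rw [hy] at h1
    rw [mem_ball, dist_comm] at hv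
    rw [hxy, ← dist_eq_norm, ← dist_eq_norm, dist_comm y p, dist_comm u v]
    linarith
  obtain ⟨z, hzs, hzΩ⟩ : (segment ℝ x y ∩ frontier Ω).Nonempty := by
    -- Otherwise the open sets `Ω` and `(closure Ω)ᶜ` would disconnect the segment.
    by_contra hne
    obtain ⟨w, -, hw, hw'⟩ := (convex_segment (𝕜 := ℝ) x y).isPreconnected Ω (closure Ω)ᶜ hΩopen
      isClosed_closure.isOpen_compl
      (fun w hw => by
        by_contra h
        simp only [Set.mem_union, Set.mem_compl_iff, not_or, not_not] at h
        exact hne ⟨w, hw, by rw [hΩopen.frontier_eq]; exact ⟨h.2, h.1⟩⟩)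
      ⟨y, right_mem_segment ℝ x y, hyΩ⟩ ⟨x, left_mem_segment ℝ x y, hout x hxcl⟩
    exact hw' (subset_closure hw)
  have hsum := dist_add_dist_of_mem_segment hzs
  rw [dist_eq_norm, dist_comm, dist_eq_norm, dist_eq_norm, norm_sub_rev x z] at hsum
  have hΩ := setDist_le_of_mem_closure (frontier_subset_closure hzΩ) hxcl
  have hle : sInf {d : ℝ | ∃ x ∈ frontier (ball p η), ∃ y ∈ frontier D, ∃ z ∈ frontier Ω,
      d = ‖x - y‖ + ‖y - z‖} ≤ ‖x - y‖ + ‖y - z‖ := by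
    refine csInf_le ⟨0, ?_⟩ ⟨x, hxB, y, hyD, z, hzΩ, rfl⟩
    rintro _ ⟨a, -, b, -, c, -, rfl⟩
    positivity
  linarith
end

section
/- Let B′ = ball(q,ρ) be an open ball in ℝ³ with ρ > 0, and let p ∈ ℝ³ with ‖p−q‖ > ρ. Then liminf_{τ→∞} τ² e^{2τ(‖p−q‖−ρ)} ∫_{B′} e^{−2τ‖x−p‖} dx > 0. -/
/-!
Put `d = ‖p - q‖ - ρ`, the distance from `p` to the ball. In orthonormal coordinates
`(y₀, y₁, y₂)` centred at `p` with the first axis pointing to `q`, the points of the ball with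
`‖x - p‖ ≤ d + s` form a cap of height about `s` and width about `√s`, hence of volume about `s²`,
and the integral is of exact order `τ⁻² e^{-2τd}`. Both bounds are needed: a real-valued `liminf`
is meaningful only for a function that does not tend to `+∞`.

* Lower bound (`le_exp_integral`): the box `d + 1/τ < y₀ < d + 2/τ`, `|y₁|, |y₂| < √(ρ/(2τ))` has
  volume `2ρ/τ²`, lies in the ball for large `τ`, and satisfies `‖x - p‖ ≤ d + (2 + ρ/d)/τ`.
* Upper bound (`exp_integral_le`): on the ball `y₁² + y₂² ≤ 2ρ(y₀ - d)` and `‖x - p‖ ≥ y₀`, so the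
  integrand is dominated by a product of an exponential in `y₀` and Gaussians in `y₁, y₂`.
-/

open MeasureTheory Metric Filter Real

/-- Orthonormal coordinates centred at `p` whose first axis points from `p` to `q`. -/
lemma exists_axis_coords (p q : EuclideanSpace ℝ (Fin 3)) (h : 0 < ‖p - q‖) :
    ∃ φ : EuclideanSpace ℝ (Fin 3) → (Fin 3 → ℝ),
      MeasurePreserving φ volume volume ∧
      (∀ x, ‖x - p‖ ^ 2 = φ x 0 ^ 2 + φ x 1 ^ 2 + φ x 2 ^ 2) ∧
      (∀ x, ‖x - q‖ ^ 2 = (φ x 0 - ‖p - q‖) ^ 2 + φ x 1 ^ 2 + φ x 2 ^ 2) := by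
  set R := ‖p - q‖ with hR
  have hv : Orthonormal ℝ (({0} : Set (Fin 3)).domRestrict
      (fun _ => R⁻¹ • (q - p) : Fin 3 → EuclideanSpace ℝ (Fin 3))) := by
    constructor
    · intro i
      simp only [Set.domRestrict_apply, norm_smul, norm_inv, Real.norm_eq_abs, abs_of_pos h]
      rw [norm_sub_rev, ← hR]
      exact inv_mul_cancel₀ h.ne'
    · intro i j hij
      exact absurd (Subsingleton.elim i j) hij
  obtain ⟨b, hb⟩ := hv.exists_orthonormalBasis_extension_of_card_eq (by simp)
  have hb0 : b 0 = R⁻¹ • (q - p) := hb 0 rfl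
  have hqp : q - p = R • b 0 := by
    rw [hb0, smul_smul, mul_inv_cancel₀ h.ne', one_smul]
  refine ⟨fun x => (b.repr (x - p)).ofLp, ?_, ?_, ?_⟩
  · exact (PiLp.volume_preserving_ofLp (Fin 3)).comp
      (b.measurePreserving_repr.comp (measurePreserving_sub_right volume p))
  · intro x
    rw [← b.repr.norm_map, EuclideanSpace.norm_sq_eq]
    simp [Fin.sum_univ_three]
  · intro x
    have : x - q = (x - p) - R • b 0 := by rw [← hqp]; abel
    rw [this, ← b.repr.norm_map, EuclideanSpace.norm_sq_eq]
    simp [Fin.sum_univ_three]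

lemma integrableOn_exp_ball (p q : EuclideanSpace ℝ (Fin 3)) (ρ τ : ℝ) :
    IntegrableOn (fun x => Real.exp (-2 * τ * ‖x - p‖)) (ball q ρ) volume := by
  have hc : Continuous fun x : EuclideanSpace ℝ (Fin 3) => Real.exp (-2 * τ * ‖x - p‖) := by
    fun_prop
  exact (hc.continuousOn.integrableOn_compact (isCompact_closedBall q ρ)).mono_set
    ball_subset_closedBall

lemma le_exp_integral (q : EuclideanSpace ℝ (Fin 3)) (ρ : ℝ) (hρ : 0 < ρ)
    (p : EuclideanSpace ℝ (Fin 3)) (hp : ρ < ‖p - q‖) (τ : ℝ) (hτ : 0 < τ) (hτρ : 2 / ρ ≤ τ) :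
    2 * ρ / τ ^ 2 * Real.exp (-2 * τ * ((‖p - q‖ - ρ) + (2 + ρ / (‖p - q‖ - ρ)) / τ)) ≤
      ∫ x in ball q ρ, Real.exp (-2 * τ * ‖x - p‖) := by
  obtain ⟨φ, hφ, hxp, hxq⟩ := exists_axis_coords p q (hρ.trans hp)
  set R := ‖p - q‖
  obtain ⟨d, hd⟩ : ∃ d, d = R - ρ := ⟨_, rfl⟩
  have hd0 : 0 < d := by linarith
  rw [← hd]
  set h := √(ρ / (2 * τ)) with hh
  have hh2 : h ^ 2 = ρ / (2 * τ) := Real.sq_sqrt (by positivity)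
  have hh0 : 0 ≤ h := Real.sqrt_nonneg _
  obtain ⟨t, ht⟩ : ∃ t, t = 1 / τ := ⟨_, rfl⟩
  have ht0 : 0 < t := by rw [ht]; positivity
  have hh2' : h ^ 2 = ρ * t / 2 := by rw [hh2, ht]; field_simp
  have htρ : 2 * t ≤ ρ := by
    rw [div_le_iff₀ hρ] at hτρ
    rw [ht, mul_one_div, div_le_iff₀ hτ]; linarith
  -- The corners of the box `B`, whose sides have lengths `1/τ`, `2h`, `2h`.
  let lo : Fin 3 → ℝ := ![d + t, -h, -h]
  let hi : Fin 3 → ℝ := ![d + 2 * t, h, h]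
  have hle : lo ≤ hi := by
    intro i
    fin_cases i <;> simp [lo, hi] <;> linarith
  let B : Set (Fin 3 → ℝ) := Set.univ.pi fun i => Set.Ioo (lo i) (hi i)
  have hBm : MeasurableSet B := MeasurableSet.univ_pi fun i => measurableSet_Ioo
  have hBmem : ∀ y ∈ B, (d + t < y 0 ∧ y 0 < d + 2 * t) ∧ y 1 ^ 2 ≤ ρ * t / 2 ∧
      y 2 ^ 2 ≤ ρ * t / 2 := by
    intro y hy
    have h0 := hy 0 trivial
    have h1 := hy 1 trivial
    have h2 := hy 2 trivial
    simp only [lo, hi, Set.mem_Ioo, Matrix.cons_val] at h0 h1 h2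
    rw [← hh2']
    exact ⟨h0, sq_le_sq' h1.1.le h1.2.le, sq_le_sq' h2.1.le h2.2.le⟩
  have hBvol : volume.real B = 2 * ρ / τ ^ 2 := by
    have := Real.volume_pi_Ioo_toReal hle
    rw [Measure.real, this, Fin.prod_univ_three]
    simp only [lo, hi, Matrix.cons_val]
    have : (d + 2 * t - (d + t)) * (h - -h) * (h - -h) = 4 * t * h ^ 2 := by ring
    rw [this, hh2', ht]; field_simp; norm_num
  have hSvol : volume (φ ⁻¹' B) = volume B := hφ.measure_preimage hBm.nullMeasurableSet
  have hSreal : volume.real (φ ⁻¹' B) = 2 * ρ / τ ^ 2 := by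
    rw [Measure.real, hSvol, ← hBvol]; rfl
  have hsub : φ ⁻¹' B ⊆ ball q ρ := by
    intro x hx
    obtain ⟨⟨h0, h0'⟩, h1, h2⟩ := hBmem _ hx
    rw [mem_ball, dist_eq_norm]
    refine lt_of_pow_lt_pow_left₀ 2 hρ.le ?_
    rw [hxq]
    obtain ⟨v, hv⟩ : ∃ v, v = φ x 0 - d := ⟨_, rfl⟩
    have : φ x 0 - R = v - ρ := by rw [hv, hd]; ring
    rw [this]
    have hv1 : t < v := by linarith
    have hv2 : v < ρ := by linarith
    nlinarith [mul_pos (ht0.trans hv1) (sub_pos.2 hv2), mul_pos hρ (sub_pos.2 hv1)]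
  have hBfin : volume (φ ⁻¹' B) ≠ ⊤ :=
    ((measure_mono hsub).trans_lt measure_ball_lt_top).ne
  have hbound : ∀ x ∈ φ ⁻¹' B, Real.exp (-2 * τ * (d + (2 + ρ / d) / τ)) ≤
      Real.exp (-2 * τ * ‖x - p‖) := by
    intro x hx
    obtain ⟨⟨h0, h0'⟩, h1, h2⟩ := hBmem _ hx
    have key : ‖x - p‖ ≤ d + (2 + ρ / d) / τ := by
      have e : (2 + ρ / d) / τ = 2 * t + ρ / d * t := by rw [ht]; ring
      rw [e]
      have hw : 0 < ρ / d * t := by positivity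
      have hw' : d * (ρ / d * t) = ρ * t := by field_simp
      refine le_of_sq_le_sq ?_ (by positivity)
      rw [hxp]
      have h3 : φ x 0 ^ 2 ≤ (d + 2 * t) ^ 2 :=
        pow_le_pow_left₀ (by linarith) h0'.le 2
      nlinarith [mul_pos ht0 hw, mul_pos hρ ht0]
    apply Real.exp_le_exp.2
    nlinarith
  have hint := integrableOn_exp_ball p q ρ τ
  have h1 := setIntegral_ge_of_const_le (hφ.measurable hBm) hBfin hbound (hint.mono_set hsub)
  rw [hSreal, smul_eq_mul] at h1
  exact h1.trans (setIntegral_mono_set hint (ae_of_all _ fun x => (Real.exp_pos _).le)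
    hsub.eventuallyLE)

lemma exp_integral_le (q : EuclideanSpace ℝ (Fin 3)) (ρ : ℝ) (hρ : 0 < ρ)
    (p : EuclideanSpace ℝ (Fin 3)) (hp : ρ < ‖p - q‖) (τ : ℝ) (hτ : 0 < τ) :
    ∫ x in ball q ρ, Real.exp (-2 * τ * ‖x - p‖) ≤
      2 * π * ρ / τ ^ 2 * Real.exp (-2 * τ * (‖p - q‖ - ρ)) := by
  obtain ⟨φ, hφ, hxp, hxq⟩ := exists_axis_coords p q (hρ.trans hp)
  set R := ‖p - q‖
  obtain ⟨d, hd⟩ : ∃ d, d = R - ρ := ⟨_, rfl⟩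
  have hd0 : 0 < d := by linarith
  rw [← hd]
  have hb : 0 < τ / (2 * ρ) := by positivity
  let g : ℝ → ℝ := fun s => Real.exp (-(τ / (2 * ρ)) * s ^ 2)
  let g₀ : ℝ → ℝ := (Set.Ioi d).indicator fun s => Real.exp (-τ * s)
  have hg : Integrable g := integrable_exp_neg_mul_sq hb
  have hg₀ : Integrable g₀ :=
    (integrable_indicator_iff measurableSet_Ioi).2 (integrableOn_exp_mul_Ioi (by linarith) d)
  have hgI : ∫ s, g s = √(π / (τ / (2 * ρ))) := integral_gaussian _
  have hg₀I : ∫ s, g₀ s = Real.exp (-τ * d) / τ := by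
    rw [integral_indicator measurableSet_Ioi, integral_exp_mul_Ioi (by linarith)]
    rw [neg_div_neg_eq]
  let f : Fin 3 → ℝ → ℝ := ![g₀, g, g]
  let F : (Fin 3 → ℝ) → ℝ := fun y => ∏ i, f i (y i)
  have hF : Integrable F := by
    refine Integrable.fintype_prod fun i => ?_
    fin_cases i
    exacts [hg₀, hg, hg]
  have hFI : ∫ y, F y = Real.exp (-τ * d) / τ * (π / (τ / (2 * ρ))) := by
    have := integral_fintype_prod_volume_eq_prod (𝕜 := ℝ) f
    rw [show ∫ y, F y = _ from this, Fin.prod_univ_three]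
    simp only [f, Matrix.cons_val]
    rw [hgI, hg₀I, mul_assoc, Real.mul_self_sqrt (by positivity)]
  have hF0 : ∀ y, 0 ≤ F y := by
    intro y
    simp only [F, f, Fin.prod_univ_three, Matrix.cons_val]
    have : 0 ≤ g₀ (y 0) := Set.indicator_nonneg (fun _ _ => (Real.exp_pos _).le) _
    positivity
  have hFφ : Integrable (F ∘ φ) := (hφ.integrable_comp hF.aestronglyMeasurable).2 hF
  have hFφI : ∫ x, F (φ x) = ∫ y, F y := by
    rw [← hφ.map_eq, integral_map hφ.measurable.aemeasurable]
    rw [hφ.map_eq]; exact hF.aestronglyMeasurable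
  have hpt : ∀ x ∈ ball q ρ, Real.exp (-2 * τ * ‖x - p‖) ≤ Real.exp (-τ * d) * F (φ x) := by
    intro x hx
    rw [mem_ball, dist_eq_norm] at hx
    have hx2 : ‖x - q‖ ^ 2 < ρ ^ 2 := pow_lt_pow_left₀ hx (norm_nonneg _) two_ne_zero
    rw [hxq] at hx2
    obtain ⟨u, hu⟩ : ∃ u, u = φ x 0 - d := ⟨_, rfl⟩
    have e : φ x 0 - R = u - ρ := by rw [hu, hd]; ring
    rw [e] at hx2
    have hcap : φ x 1 ^ 2 + φ x 2 ^ 2 ≤ 2 * ρ * u := by nlinarith [sq_nonneg u]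
    have hu0 : 0 < u := by
      nlinarith [sq_nonneg u, sq_nonneg (φ x 1), sq_nonneg (φ x 2), mul_pos hρ hρ]
    have hr : φ x 0 ≤ ‖x - p‖ := by
      refine le_of_sq_le_sq ?_ (norm_nonneg _)
      rw [hxp]; nlinarith [sq_nonneg (φ x 1), sq_nonneg (φ x 2)]
    have hmem : φ x 0 ∈ Set.Ioi d := by rw [Set.mem_Ioi]; linarith
    simp only [F, f, Fin.prod_univ_three, Matrix.cons_val, g₀, g, Set.indicator_of_mem hmem]
    rw [← Real.exp_add, ← Real.exp_add, ← Real.exp_add]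
    apply Real.exp_le_exp.2
    -- Half of `2τ‖x - p‖` pays for the decay in `y₀`; the other half, through
    -- `y₀ - d ≥ (y₁² + y₂²) / (2ρ)`, pays for the Gaussians.
    have h1 : τ / (2 * ρ) * (φ x 1 ^ 2 + φ x 2 ^ 2) ≤ τ * u := by
      calc _ ≤ τ / (2 * ρ) * (2 * ρ * u) := by gcongr
        _ = τ * u := by field_simp
    have h2 : τ * φ x 0 ≤ τ * ‖x - p‖ := by gcongr
    have h3 : τ * u = τ * φ x 0 - τ * d := by rw [hu]; ring
    linarith
  calc ∫ x in ball q ρ, Real.exp (-2 * τ * ‖x - p‖)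
      ≤ ∫ x in ball q ρ, Real.exp (-τ * d) * F (φ x) :=
        setIntegral_mono_on (integrableOn_exp_ball p q ρ τ) (hFφ.const_mul _).integrableOn
          measurableSet_ball hpt
    _ ≤ ∫ x, Real.exp (-τ * d) * F (φ x) :=
        setIntegral_le_integral (hFφ.const_mul _)
          (ae_of_all _ fun x => mul_nonneg (Real.exp_pos _).le (hF0 _))
    _ = 2 * π * ρ / τ ^ 2 * Real.exp (-2 * τ * d) := by
        rw [integral_const_mul, hFφI, hFI,
          show -2 * τ * d = -τ * d + -τ * d by ring, Real.exp_add]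
        field_simp

/-- Proposition 3.2 of [IK2]:
`liminf_{τ→∞} τ² e^{2τ(‖p-q‖-ρ)} ∫_{B′} e^{-2τ‖x-p‖} dx > 0`. -/
theorem liminf_exp_integral_pos
    (q : EuclideanSpace ℝ (Fin 3)) (ρ : ℝ) (hρ : 0 < ρ)
    (p : EuclideanSpace ℝ (Fin 3)) (hp : ρ < ‖p - q‖) :
    0 < Filter.liminf (fun τ : ℝ =>
        τ ^ 2 * Real.exp (2 * τ * (‖p - q‖ - ρ)) *
          ∫ x in ball q ρ, Real.exp (-2 * τ * ‖x - p‖)) Filter.atTop := by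
  have hlow : 0 < 2 * ρ * Real.exp (-2 * (2 + ρ / (‖p - q‖ - ρ))) := by positivity
  refine hlow.trans_le (le_liminf_of_le ?_ ?_)
  -- The upper bound rules out the junk value `0` of an unbounded supremum.
  · refine IsBoundedUnder.isCoboundedUnder_ge ⟨2 * π * ρ, ?_⟩
    rw [eventually_map]
    filter_upwards [eventually_gt_atTop 0] with τ hτ
    refine (mul_le_mul_of_nonneg_left (exp_integral_le q ρ hρ p hp τ hτ) (by positivity)).trans_eq ?_
    rw [show -2 * τ * (‖p - q‖ - ρ) = -(2 * τ * (‖p - q‖ - ρ)) by ring, Real.exp_neg]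
    field_simp
  · filter_upwards [eventually_gt_atTop 0, eventually_ge_atTop (2 / ρ)] with τ hτ hτρ
    refine Eq.trans_le ?_
      (mul_le_mul_of_nonneg_left (le_exp_integral q ρ hρ p hp τ hτ hτρ) (by positivity))
    have e : -2 * τ * ((‖p - q‖ - ρ) + (2 + ρ / (‖p - q‖ - ρ)) / τ) =
        -(2 * τ * (‖p - q‖ - ρ)) + -2 * (2 + ρ / (‖p - q‖ - ρ)) := by
      rw [mul_add, mul_assoc (-2) τ (_ / τ), mul_div_cancel₀ _ hτ.ne']; ring
    rw [e, Real.exp_add, Real.exp_neg]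
    field_simp
end

section
/- Let B = ball(p,η) and B′ = ball(q,ρ) be open balls in ℝ³ with η, ρ > 0 and ‖p−q‖ > η + ρ (so the closed balls are disjoint). Then there exist constants C′ > 0 and τ₀ > 0 such that for all τ ≥ τ₀ and all x ∈ B′: τ² e^{τ·d_B(x)} ∫_B (e^{−τ‖x−y‖}/‖x−y‖) dy ≥ C′. -/
/-! The factor `τ ^ (-2)` is the volume of the part of the ball on which the exponential is within a
constant factor of its maximal value `exp (-τ d)`, where `d` is the distance from `x` to the ball.
Near the point of the sphere closest to `x`, a box of depth `1 / τ` in the radial direction and of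
width of order `τ ^ (-1/2)` in the two tangential directions still fits in the ball
(`exists_box`): leaving the axis by `r` costs only order `r ^ 2` both in the distance to the centre
and in the distance to `x`. On that box `‖x - y‖ ≤ d + C / τ`, so the integrand is at least
`exp (-τ d - C) / M`, and the box has volume `η / τ ^ 2`. The constants `C` and `M` depend only on a
positive lower bound for `d` and an upper bound for `‖x - y‖`, hence not on `x`. -/

open MeasureTheory Metric Real

/-- The box behind the lower bound, of depth `h` and tangential widths `√(η h)`. It lies inside the
ball, has volume `η h ^ 2`, and its points are at distance at most `d + C h` from `x`, where
`d = ‖x - p‖ - η ≥ δ`. -/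
theorem exists_box (p x : EuclideanSpace ℝ (Fin 3)) (η δ h : ℝ) (hη : 0 < η) (hδ : 0 < δ)
    (hh : 0 < h) (hhη : 2 * h ≤ η) (hx : δ ≤ ‖x - p‖ - η) :
    ∃ S : Set (EuclideanSpace ℝ (Fin 3)), MeasurableSet S ∧ S ⊆ ball p η ∧
      volume.real S = η * h ^ 2 ∧
      ∀ y ∈ S, ‖x - y‖ ≤ ‖x - p‖ - η + (2 + η / (4 * δ)) * h := by
  set R := ‖x - p‖ with hR
  have hRpos : 0 < R := by linarith
  -- Orthonormal coordinates centred at `p` whose first axis points towards `x`.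
  obtain ⟨b, hb⟩ : ∃ b : OrthonormalBasis (Fin 3) ℝ (EuclideanSpace ℝ (Fin 3)),
      ∀ i ∈ ({0} : Set (Fin 3)), b i = (fun _ => R⁻¹ • (x - p)) i := by
    refine Orthonormal.exists_orthonormalBasis_extension_of_card_eq (by simp) ?_
    rw [orthonormal_iff_ite]
    rintro ⟨i, hi⟩ ⟨j, hj⟩
    simp only [Set.mem_singleton_iff] at hi hj
    subst hi hj
    simp only [Set.domRestrict_apply, if_true, real_inner_self_eq_norm_sq, norm_smul, norm_inv,
      Real.norm_eq_abs, abs_of_pos hRpos]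
    rw [← hR]
    field_simp
  have hb0 : x - p = R • b 0 := by
    rw [hb 0 rfl, smul_smul, mul_inv_cancel₀ hRpos.ne', one_smul]
  -- With `2 r ^ 2 = η h / 2`, the box fits in the ball because `η ^ 2 - (η - h) ^ 2 > η h / 2`.
  set r := √(η * h) / 2 with hr
  have hrpos : 0 ≤ r := by positivity
  have hr2 : r ^ 2 = η * h / 4 := by
    rw [hr, div_pow, Real.sq_sqrt (by positivity)]; norm_num
  let φ : EuclideanSpace ℝ (Fin 3) → (Fin 3 → ℝ) := fun y => WithLp.ofLp (b.repr (y - p))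
  have hφ : MeasurePreserving φ volume volume :=
    (PiLp.volume_preserving_ofLp (Fin 3)).comp
      (b.measurePreserving_repr.comp (measurePreserving_sub_right volume p))
  let lo : Fin 3 → ℝ := ![η - 2 * h, -r, -r]
  let hi : Fin 3 → ℝ := ![η - h, r, r]
  have hcoord : ∀ y ∈ φ ⁻¹' Set.Icc lo hi, (η - 2 * h ≤ φ y 0 ∧ φ y 0 ≤ η - h) ∧
      φ y 1 ^ 2 ≤ r ^ 2 ∧ φ y 2 ^ 2 ≤ r ^ 2 := by
    rintro y ⟨h1, h2⟩
    have a0 := h1 0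
    have a1 := h1 1
    have a2 := h1 2
    have b0 := h2 0
    have b1 := h2 1
    have b2 := h2 2
    simp only [lo, hi, Matrix.cons_val] at a0 a1 a2 b0 b1 b2
    exact ⟨⟨a0, b0⟩, sq_le_sq' a1 b1, sq_le_sq' a2 b2⟩
  refine ⟨φ ⁻¹' Set.Icc lo hi, hφ.measurable measurableSet_Icc, ?_, ?_, ?_⟩
  · intro y hy
    obtain ⟨⟨h0, h0'⟩, h1, h2⟩ := hcoord y hy
    have hn : ‖y - p‖ ^ 2 = φ y 0 ^ 2 + φ y 1 ^ 2 + φ y 2 ^ 2 := by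
      rw [← b.repr.norm_map, EuclideanSpace.norm_sq_eq, Fin.sum_univ_three]
      simp [φ]
    rw [mem_ball, dist_eq_norm]
    refine lt_of_pow_lt_pow_left₀ 2 hη.le ?_
    nlinarith
  · rw [measureReal_def, hφ.measure_preimage measurableSet_Icc.nullMeasurableSet,
      Real.volume_Icc_pi_toReal, Fin.prod_univ_three]
    · simp only [lo, hi, Matrix.cons_val]
      linear_combination (4 * h) * hr2
    · intro i
      fin_cases i
      · simp [lo, hi]; linarith
      · simp [lo, hi]; linarith
      · simp [lo, hi]; linarith
  · intro y hy
    obtain ⟨⟨h0, h0'⟩, h1, h2⟩ := hcoord y hy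
    have hxy : b.repr (x - y) = R • EuclideanSpace.single 0 1 - b.repr (y - p) := by
      rw [← b.repr_self, ← map_smul, ← hb0, ← map_sub]
      congr 1; abel
    have hn : ‖x - y‖ ^ 2 = (R - φ y 0) ^ 2 + φ y 1 ^ 2 + φ y 2 ^ 2 := by
      rw [← b.repr.norm_map, EuclideanSpace.norm_sq_eq, Fin.sum_univ_three, hxy]
      simp [φ]
      ring
    have hC : 0 < η / (4 * δ) := by positivity
    refine le_of_pow_le_pow_left₀ two_ne_zero (by nlinarith [mul_pos hC hh]) ?_
    have hk : δ * (η / (4 * δ) * h) = η * h / 4 := by field_simp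
    have hkp : 0 < η / (4 * δ) * h := by positivity
    -- `k = η h / (4 δ)` is the extra distance that absorbs the tangential part `2 r ^ 2 = 2 δ k`.
    rw [add_mul, ← add_assoc]
    generalize η / (4 * δ) * h = k at *
    have e1 : (R - φ y 0) ^ 2 ≤ (R - η + 2 * h) ^ 2 := by
      apply pow_le_pow_left₀ <;> linarith
    have e2 : δ * k ≤ (R - η + 2 * h) * k := by gcongr; linarith
    nlinarith

/-- Lower bound for `τ² e^{τ d_B(x)} ∫_B e^{-τ‖x-y‖}/‖x-y‖ dy`, uniform over `x ∈ B′`. -/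
theorem I_lower_bound
    (p q : EuclideanSpace ℝ (Fin 3)) (η ρ : ℝ) (hη : 0 < η) (hρ : 0 < ρ)
    (hsep : η + ρ < ‖p - q‖) :
    ∃ C' > (0 : ℝ), ∃ τ₀ > (0 : ℝ), ∀ τ ≥ τ₀, ∀ x ∈ ball q ρ,
      C' ≤ τ ^ 2 * Real.exp (τ * Metric.infDist x (ball p η)) *
        ∫ y in ball p η, Real.exp (-τ * ‖x - y‖) / ‖x - y‖ := by
  set δ := ‖p - q‖ - η - ρ with hδdef
  have hδ : 0 < δ := by linarith
  set C := 2 + η / (4 * δ) with hC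
  set M := ‖p - q‖ + ρ + η with hM
  have hMpos : 0 < M := by positivity
  refine ⟨η * Real.exp (-C) / M, by positivity, 2 / η, by positivity, fun τ hτ x hx => ?_⟩
  have hτ0 : 0 < τ := lt_of_lt_of_le (by positivity) hτ
  have hτη : 2 * τ⁻¹ ≤ η := by
    rw [ge_iff_le, div_le_iff₀ hη] at hτ
    rw [← div_eq_mul_inv, div_le_iff₀ hτ0]; linarith
  rw [mem_ball, dist_eq_norm] at hx
  have hxp : ‖p - q‖ ≤ ‖x - p‖ + ‖x - q‖ := by
    rw [norm_sub_rev x p]; exact norm_sub_le_norm_sub_add_norm_sub p x q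
  have hxp' : ‖x - p‖ ≤ ‖x - q‖ + ‖p - q‖ := by
    rw [norm_sub_rev p q]; exact norm_sub_le_norm_sub_add_norm_sub x q p
  have hd : δ ≤ ‖x - p‖ - η := by linarith
  obtain ⟨S, hSm, hSB, hSv, hS⟩ := exists_box p x η δ τ⁻¹ hη hδ (by positivity) hτη hd
  set d := ‖x - p‖ - η with hddef
  have hfar : ∀ y ∈ closedBall p η, d ≤ ‖x - y‖ ∧ ‖x - y‖ ≤ M := by
    intro y hy
    rw [mem_closedBall, dist_eq_norm] at hy
    have h1 := norm_sub_le_norm_sub_add_norm_sub x y p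
    have h2 := norm_sub_le_norm_sub_add_norm_sub x p y
    rw [norm_sub_rev p y] at h2
    constructor <;> linarith
  have hinf : d ≤ Metric.infDist x (ball p η) := by
    rw [le_infDist (nonempty_ball.2 hη)]
    intro y hy
    rw [dist_eq_norm]
    exact (hfar y (ball_subset_closedBall hy)).1
  have hint : IntegrableOn (fun y => Real.exp (-τ * ‖x - y‖) / ‖x - y‖) (ball p η) := by
    refine IntegrableOn.mono_set ?_ ball_subset_closedBall
    refine ContinuousOn.integrableOn_compact (isCompact_closedBall p η) ?_
    refine ContinuousOn.div (by fun_prop) (by fun_prop) fun y hy => ?_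
    have := (hfar y hy).1
    linarith
  have hlow : Real.exp (-τ * d - C) / M * (η * τ⁻¹ ^ 2) ≤
      ∫ y in ball p η, Real.exp (-τ * ‖x - y‖) / ‖x - y‖ := by
    rw [← hSv]
    refine le_trans ?_ (setIntegral_mono_set hint
      (Filter.Eventually.of_forall fun y => by positivity) hSB.eventuallyLE)
    refine setIntegral_ge_of_const_le_real hSm
      ((measure_mono hSB).trans_lt measure_ball_lt_top).ne ?_ (hint.mono_set hSB)
    intro y hy
    obtain ⟨h1, h2⟩ := hfar y (ball_subset_closedBall (hSB hy))
    have h0 : 0 < ‖x - y‖ := by linarith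
    refine div_le_div₀ (Real.exp_pos _).le (Real.exp_le_exp.2 ?_) h0 h2
    have h3 := mul_le_mul_of_nonneg_left (hS y hy) hτ0.le
    have h4 : τ * (d + C * τ⁻¹) = τ * d + C := by field_simp
    linarith
  calc η * Real.exp (-C) / M
      = τ ^ 2 * Real.exp (τ * d) * (Real.exp (-τ * d - C) / M * (η * τ⁻¹ ^ 2)) := by
        have : Real.exp (-C) = Real.exp (τ * d) * Real.exp (-τ * d - C) := by
          rw [← Real.exp_add]; ring_nf
        rw [this]; field_simp
    _ ≤ _ := by gcongr
end

section
/- Let B = ball(p,η) and B′ = ball(q,ρ) be open balls in ℝ³ with η, ρ > 0 and ‖p−q‖ > η + ρ (so the closed balls are disjoint). Define the vector-valued integral J(x;τ) = ∫_B e^{−τ‖x−y‖} (x−y)/‖x−y‖³ dy. Then there exist constants C′ > 0 and τ₀ > 0 such that for all τ ≥ τ₀ and all x ∈ B′: τ² e^{τ·d_B(x)} ‖J(x;τ)‖ ≥ C′. -/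
/-!
Project `J` onto the unit vector `e` from `p` to `x`. On the ball the integrand has component along
`e` at least `d e^{-τ r} / r³`, with `d = ‖x - p‖ - η` bounded below and `r` bounded above uniformly
in `x`; in particular it is nonnegative, so the integral may be restricted to any subset of the
ball. A box near the point of the ball closest to `x`, of height of order `τ⁻¹` in the direction `e`
and of width of order `τ^{-1/2}` in the two orthogonal directions, lies inside the ball
(`cap_mem_ball`), stays within distance `d + K / τ` of `x` (`cap_dist_le`), and has volume of order
`τ⁻²` (`volume_cap`). On it `e^{-τ r} ≥ e^{-K} e^{-τ d}`, which is the claimed bound.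
-/

open MeasureTheory Metric Real

/-- `J(x;τ) = ∫_B e^{-τ‖x-y‖} (x-y)/‖x-y‖³ dy`. -/
noncomputable def Jfun (p : EuclideanSpace ℝ (Fin 3)) (η : ℝ) (τ : ℝ)
    (x : EuclideanSpace ℝ (Fin 3)) : EuclideanSpace ℝ (Fin 3) :=
  ∫ y in ball p η, (Real.exp (-τ * ‖x - y‖) / ‖x - y‖ ^ 3) • (x - y)

/-- The box of points whose displacement from `p`, in the coordinates of the orthonormal basis `b`,
has first coordinate in `(η - 2η/τ, η - η/τ)` and the other two in `(0, η / √(2τ))`. -/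
def capBox (b : OrthonormalBasis (Fin 3) ℝ (EuclideanSpace ℝ (Fin 3)))
    (p : EuclideanSpace ℝ (Fin 3)) (η τ : ℝ) : Set (EuclideanSpace ℝ (Fin 3)) :=
  (fun y => (b.repr (y - p)).ofLp) ⁻¹' (Set.univ.pi fun i =>
    Set.Ioo (![η - 2 * η / τ, 0, 0] i) (![η - η / τ, η / √(2 * τ), η / √(2 * τ)] i))

lemma measurePreserving_capCoord (b : OrthonormalBasis (Fin 3) ℝ (EuclideanSpace ℝ (Fin 3)))
    (p : EuclideanSpace ℝ (Fin 3)) :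
    MeasurePreserving (fun y : EuclideanSpace ℝ (Fin 3) => (b.repr (y - p)).ofLp)
      volume volume :=
  (PiLp.volume_preserving_ofLp (Fin 3)).comp
    ((b.measurePreserving_repr).comp (measurePreserving_sub_right volume p))

lemma measurableSet_capBox (b : OrthonormalBasis (Fin 3) ℝ (EuclideanSpace ℝ (Fin 3)))
    (p : EuclideanSpace ℝ (Fin 3)) (η τ : ℝ) : MeasurableSet (capBox b p η τ) :=
  (measurePreserving_capCoord b p).measurable
    (MeasurableSet.univ_pi fun _ => measurableSet_Ioo)

lemma volume_cap (b : OrthonormalBasis (Fin 3) ℝ (EuclideanSpace ℝ (Fin 3)))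
    (p : EuclideanSpace ℝ (Fin 3)) {η τ : ℝ} (hη : 0 < η) (hτ : 0 < τ) :
    volume.real (capBox b p η τ) = η ^ 3 / (2 * τ ^ 2) := by
  have h : volume (capBox b p η τ) = volume (Set.univ.pi fun i : Fin 3 =>
      Set.Ioo (![η - 2 * η / τ, 0, 0] i) (![η - η / τ, η / √(2 * τ), η / √(2 * τ)] i)) :=
    (measurePreserving_capCoord b p).measure_preimage
      (MeasurableSet.univ_pi fun _ => measurableSet_Ioo).nullMeasurableSet
  have hs : √(2 * τ) ^ 2 = 2 * τ := Real.sq_sqrt (by positivity)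
  have hs0 : 0 < √(2 * τ) := Real.sqrt_pos.2 (by positivity)
  rw [Measure.real, h, Real.volume_pi_Ioo_toReal]
  · simp only [Fin.prod_univ_three, Matrix.cons_val_zero, Matrix.cons_val_one, Matrix.cons_val]
    have h2 : (η / √(2 * τ) - 0) * (η / √(2 * τ) - 0) = η ^ 2 / (2 * τ) := by
      rw [sub_zero, div_mul_div_comm, ← sq, ← sq, hs]
    rw [mul_assoc, h2]
    field_simp
    ring
  · intro i
    fin_cases i
    · have : η / τ ≤ 2 * η / τ := by gcongr; linarith
      change η - 2 * η / τ ≤ η - η / τ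
      linarith
    · simp; positivity
    · simp; positivity

/-- Coordinate description of the box: the component along the axis `b 0`, and the square of the
transverse component. -/
lemma cap_coords {b : OrthonormalBasis (Fin 3) ℝ (EuclideanSpace ℝ (Fin 3))}
    {p y : EuclideanSpace ℝ (Fin 3)} {η τ : ℝ} (hη : 0 < η) (hτ : 0 < τ)
    (hy : y ∈ capBox b p η τ) :
    ∃ t w : ℝ, η - 2 * η / τ < t ∧ t < η - η / τ ∧ w < η ^ 2 / τ ∧
      ∀ s : ℝ, ‖s • b 0 - (y - p)‖ ^ 2 = (s - t) ^ 2 + w := by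
  have hs : √(2 * τ) ^ 2 = 2 * τ := Real.sq_sqrt (by positivity)
  have hs0 : 0 < √(2 * τ) := Real.sqrt_pos.2 (by positivity)
  simp only [capBox, Set.mem_preimage, Set.mem_univ_pi, Set.mem_Ioo] at hy
  have h0 := hy 0
  have h1 := hy 1
  have h2 := hy 2
  simp only [Matrix.cons_val_zero, Matrix.cons_val_one, Matrix.cons_val] at h0 h1 h2
  have key : ∀ u : ℝ, 0 < u → u < η / √(2 * τ) → u ^ 2 < η ^ 2 / (2 * τ) := by
    intro u hu hu'
    rw [← hs, ← div_pow]
    exact pow_lt_pow_left₀ hu' hu.le two_ne_zero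
  refine ⟨(b.repr (y - p)) 0, (b.repr (y - p)) 1 ^ 2 + (b.repr (y - p)) 2 ^ 2, h0.1, h0.2, ?_, ?_⟩
  · have : η ^ 2 / τ = η ^ 2 / (2 * τ) + η ^ 2 / (2 * τ) := by field_simp; ring
    rw [this]
    exact add_lt_add (key _ h1.1 h1.2) (key _ h2.1 h2.2)
  · intro s
    rw [← b.repr.norm_map, EuclideanSpace.norm_sq_eq]
    simp only [Fin.sum_univ_three, map_sub, map_smul, b.repr_self, PiLp.sub_apply, PiLp.smul_apply,
      PiLp.single_apply, smul_eq_mul, Real.norm_eq_abs, sq_abs]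
    simp
    ring

lemma cap_mem_ball {b : OrthonormalBasis (Fin 3) ℝ (EuclideanSpace ℝ (Fin 3))}
    {p : EuclideanSpace ℝ (Fin 3)} {η τ : ℝ} (hη : 0 < η) (hτ : 2 ≤ τ) :
    capBox b p η τ ⊆ ball p η := by
  intro y hy
  have hτ0 : 0 < τ := by linarith
  obtain ⟨t, w, h1, h2, h3, h4⟩ := cap_coords hη hτ0 hy
  have h := h4 0
  rw [zero_smul, zero_sub, norm_neg] at h
  rw [mem_ball, dist_eq_norm]
  refine lt_of_pow_lt_pow_left₀ 2 hη.le ?_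
  have hd : 2 * η / τ ≤ η := by rw [div_le_iff₀ hτ0]; nlinarith
  have ht : 0 < t := by linarith
  have ht2 : t ^ 2 < (η - η / τ) ^ 2 := pow_lt_pow_left₀ h2 ht.le two_ne_zero
  -- `(η - η/τ)² + η²/τ = η² - η (η/τ) + (η/τ)² ≤ η²`
  have e1 : η ^ 2 / τ = η * (η / τ) := by ring
  have e2 : 2 * η / τ = 2 * (η / τ) := by ring
  have e3 : 0 < η / τ := by positivity
  rw [e1] at h3
  rw [e2] at hd
  nlinarith

/-- The vector `(d + η) • b 0 - (y - p)` is `x - y` when `x` lies at distance `d + η` from `p` in the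
direction `b 0`. The constant multiplying `1 / τ` depends on `d₀` and not on `d`, which makes the
final bound uniform in `x`. -/
lemma cap_dist_le {b : OrthonormalBasis (Fin 3) ℝ (EuclideanSpace ℝ (Fin 3))}
    {p y : EuclideanSpace ℝ (Fin 3)} {η τ d d₀ : ℝ} (hη : 0 < η) (hτ : 0 < τ)
    (hd₀ : 0 < d₀) (hd : d₀ ≤ d) (hy : y ∈ capBox b p η τ) :
    ‖(d + η) • b 0 - (y - p)‖ ≤ d + (2 * η + η ^ 2 / (2 * d₀)) / τ := by
  obtain ⟨t, w, h1, h2, h3, h4⟩ := cap_coords hη hτ hy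
  have hd' : 0 < d := by linarith
  refine le_of_sq_le_sq ?_ (by positivity)
  rw [h4]
  have e3 : 0 < η / τ := by positivity
  have e2 : 2 * η / τ = 2 * (η / τ) := by ring
  have hA : (d + η - t) ^ 2 ≤ (d + 2 * η / τ) ^ 2 := by
    apply pow_le_pow_left₀ <;> linarith
  -- the cross term `2 d · η² / (2 d₀ τ)` absorbs the transverse contribution `η² / τ`
  have hB : η ^ 2 / τ ≤ 2 * d * (η ^ 2 / (2 * d₀) / τ) := by
    have : 2 * d * (η ^ 2 / (2 * d₀) / τ) = (d / d₀) * (η ^ 2 / τ) := by field_simp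
    rw [this]
    exact le_mul_of_one_le_left (by positivity) ((one_le_div hd₀).2 hd)
  have hC : 0 ≤ η ^ 2 / (2 * d₀) / τ := by positivity
  have hD : 0 ≤ 2 * η / τ := by positivity
  rw [add_div]
  nlinarith [mul_nonneg hC hD]

/-- An orthonormal basis whose first vector is a prescribed unit vector. -/
lemma exists_basis_first {e : EuclideanSpace ℝ (Fin 3)} (he : ‖e‖ = 1) :
    ∃ b : OrthonormalBasis (Fin 3) ℝ (EuclideanSpace ℝ (Fin 3)), b 0 = e := by
  have ho : Orthonormal ℝ (({0} : Set (Fin 3)).domRestrict fun _ => e) := by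
    refine ⟨fun _ => he, fun i j hij => (hij (Subsingleton.elim i j)).elim⟩
  obtain ⟨b, hb⟩ := ho.exists_orthonormalBasis_extension_of_card_eq (by simp)
  exact ⟨b, hb 0 rfl⟩

/-- For `y` in the ball and `x` at distance `d + η` from the centre in the direction `e`, the
vector `x - y` has component at least `d` along `e`. -/
lemma le_inner_of_mem_ball {p x y e : EuclideanSpace ℝ (Fin 3)} {η d : ℝ} (he : ‖e‖ = 1)
    (hx : x - p = (d + η) • e) (hy : y ∈ ball p η) : d ≤ inner ℝ e (x - y) := by
  have h1 : x - y = (d + η) • e - (y - p) := by rw [← hx]; abel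
  rw [mem_ball, dist_eq_norm] at hy
  have h2 : inner ℝ e (y - p) ≤ ‖e‖ * ‖y - p‖ := real_inner_le_norm _ _
  rw [h1, inner_sub_right, inner_smul_right, real_inner_self_eq_norm_sq, he]
  rw [he] at h2
  linarith

/-- Lower bound for `τ² e^{τ d_B(x)} ‖J(x;τ)‖`, uniform over `x ∈ B′`. -/
theorem J_lower_bound
    (p q : EuclideanSpace ℝ (Fin 3)) (η ρ : ℝ) (hη : 0 < η) (hρ : 0 < ρ)
    (hsep : η + ρ < ‖p - q‖) :
    ∃ C' > (0 : ℝ), ∃ τ₀ > (0 : ℝ), ∀ τ ≥ τ₀, ∀ x ∈ ball q ρ,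
      C' ≤ τ ^ 2 * Real.exp (τ * Metric.infDist x (ball p η)) * ‖Jfun p η τ x‖ := by
  set d₀ := ‖p - q‖ - ρ - η with hd₀_def
  have hd₀ : 0 < d₀ := by rw [hd₀_def]; linarith
  set R := ‖p - q‖ + ρ + η with hR_def
  have hR : 0 < R := by positivity
  set K := 2 * η + η ^ 2 / (2 * d₀) with hK_def
  refine ⟨η ^ 3 / 2 * (Real.exp (-K) * (d₀ / R ^ 3)), by positivity, 2, two_pos, ?_⟩
  intro τ hτ x hx
  have hτ0 : 0 < τ := by linarith
  rw [mem_ball, dist_eq_norm] at hx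
  set d := ‖x - p‖ - η with hd_def
  have hd : d₀ ≤ d := by
    have : ‖p - q‖ ≤ ‖x - q‖ + ‖x - p‖ := by
      rw [← dist_eq_norm, ← dist_eq_norm, ← dist_eq_norm, dist_comm x p, add_comm]
      exact dist_triangle p x q
    linarith
  have hxp : 0 < ‖x - p‖ := by linarith
  set e := ‖x - p‖⁻¹ • (x - p) with he_def
  have he : ‖e‖ = 1 := by
    rw [he_def, norm_smul, norm_inv, norm_norm, inv_mul_cancel₀ hxp.ne']
  have hxe : x - p = (d + η) • e := by
    rw [hd_def, sub_add_cancel, he_def, smul_smul, mul_inv_cancel₀ hxp.ne', one_smul]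
  obtain ⟨b, hb⟩ := exists_basis_first he
  have hfar : ∀ y ∈ closedBall p η, d ≤ ‖x - y‖ := by
    intro y hy
    rw [mem_closedBall, dist_eq_norm] at hy
    have := norm_sub_le_norm_sub_add_norm_sub x y p
    linarith
  have hnear : ∀ y ∈ ball p η, ‖x - y‖ ≤ R := by
    intro y hy
    rw [mem_ball, dist_eq_norm] at hy
    have h1 := norm_sub_le_norm_sub_add_norm_sub x q p
    have h2 := norm_sub_le_norm_sub_add_norm_sub x p y
    rw [norm_sub_rev q p] at h1
    rw [norm_sub_rev p y] at h2
    linarith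
  have hinf : d ≤ infDist x (ball p η) := by
    rw [le_infDist (nonempty_ball.2 hη)]
    intro y hy
    rw [dist_eq_norm]
    exact hfar y (ball_subset_closedBall hy)
  have hint : IntegrableOn
      (fun y => (Real.exp (-τ * ‖x - y‖) / ‖x - y‖ ^ 3) • (x - y)) (ball p η) := by
    refine IntegrableOn.mono_set (ContinuousOn.integrableOn_compact
      (isCompact_closedBall p η) ?_) ball_subset_closedBall
    have hc : Continuous fun y : EuclideanSpace ℝ (Fin 3) => Real.exp (-τ * ‖x - y‖) := by fun_prop
    have hc' : Continuous fun y : EuclideanSpace ℝ (Fin 3) => ‖x - y‖ ^ 3 := by fun_prop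
    have hc'' : Continuous fun y : EuclideanSpace ℝ (Fin 3) => x - y := by fun_prop
    refine (hc.continuousOn.div hc'.continuousOn ?_).smul hc''.continuousOn
    intro y hy
    have := hfar y hy
    have : 0 < ‖x - y‖ := by linarith
    positivity
  have hpt : ∀ y ∈ ball p η, Real.exp (-τ * ‖x - y‖) * (d₀ / R ^ 3) ≤
      inner ℝ e ((Real.exp (-τ * ‖x - y‖) / ‖x - y‖ ^ 3) • (x - y)) := by
    intro y hy
    have h1 := hfar y (ball_subset_closedBall hy)
    have h0 : 0 < ‖x - y‖ := by linarith
    have h2 := hnear y hy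
    have h3 := le_inner_of_mem_ball he hxe hy
    rw [inner_smul_right, div_mul_eq_mul_div, mul_div_assoc]
    gcongr
    · linarith
    · exact hd.trans h3
  have hS : capBox b p η τ ⊆ ball p η := cap_mem_ball hη hτ
  have hint' : IntegrableOn (fun y =>
      inner ℝ e ((Real.exp (-τ * ‖x - y‖) / ‖x - y‖ ^ 3) • (x - y))) (ball p η) :=
    hint.const_inner (𝕜 := ℝ) e
  have hlow : Real.exp (-τ * d) * (Real.exp (-K) * (d₀ / R ^ 3)) * (η ^ 3 / (2 * τ ^ 2)) ≤
      ‖Jfun p η τ x‖ := by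
    calc _ = Real.exp (-τ * d) * (Real.exp (-K) * (d₀ / R ^ 3)) *
          volume.real (capBox b p η τ) := by rw [volume_cap b p hη hτ0]
      _ ≤ ∫ y in capBox b p η τ,
          inner ℝ e ((Real.exp (-τ * ‖x - y‖) / ‖x - y‖ ^ 3) • (x - y)) := by
        refine setIntegral_ge_of_const_le_real (measurableSet_capBox b p η τ)
          ((measure_mono hS).trans_lt measure_ball_lt_top).ne ?_ (hint'.mono_set hS)
        intro y hy
        refine le_trans ?_ (hpt y (hS hy))
        rw [← mul_assoc, ← Real.exp_add]
        have hxy : ‖x - y‖ ≤ d + K / τ := by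
          have := cap_dist_le hη hτ0 hd₀ hd hy
          rw [hb, ← hxe] at this
          simpa using this
        have : τ * ‖x - y‖ ≤ τ * d + K := by
          calc _ ≤ τ * (d + K / τ) := by gcongr
            _ = _ := by field_simp
        gcongr
        linarith
      _ ≤ ∫ y in ball p η,
          inner ℝ e ((Real.exp (-τ * ‖x - y‖) / ‖x - y‖ ^ 3) • (x - y)) := by
        refine setIntegral_mono_set hint' ?_ hS.eventuallyLE
        filter_upwards [ae_restrict_mem measurableSet_ball] with y hy
        exact le_trans (by positivity) (hpt y hy)
      _ = inner ℝ e (Jfun p η τ x) := integral_inner hint e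
      _ ≤ ‖e‖ * ‖Jfun p η τ x‖ := real_inner_le_norm _ _
      _ = _ := by rw [he, one_mul]
  calc _ = τ ^ 2 * Real.exp (τ * d) *
        (Real.exp (-τ * d) * (Real.exp (-K) * (d₀ / R ^ 3)) * (η ^ 3 / (2 * τ ^ 2))) := by
        rw [neg_mul, Real.exp_neg (τ * d)]
        field_simp
    _ ≤ _ := by gcongr
end

section
/- Let B = ball(p,η) with η > 0, let f : ℝ³ → ℝ be integrable with f = 0 almost everywhere outside B, and let D be a bounded measurable subset of ℝ³ with dist(D,B) > 0. Then there exist constants C > 0 and τ₀ > 0 such that for all τ ≥ τ₀: ∫_D ‖G(x;τ)‖² dx + τ² ∫_D v(x;τ)² dx ≤ C τ² e^{−2τ·dist(D,B)}. -/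
/-!
On `D × B` the distance `r = ‖x - y‖` is at least `d = setDist D B > 0`. Both kernels decrease in `r`:
`e^{-τr}/r ≤ e^{-τd}/d`, and the kernel of `G` has norm
`(1/r² + τ/r) e^{-τr} ≤ τ (1/d² + 1/d) e^{-τd}` once `τ ≥ 1`. Integrating against `f ∈ L¹` bounds `v`
and `G` uniformly on `D` (`vfun_abs_le`, `Gfun_norm_le`); squaring and integrating over `D`, which has
finite measure, gives the estimate.
-/

open MeasureTheory Metric Real

/-- `v(x;τ) = (1/(4π)) ∫_B (e^{-τ‖x-y‖}/‖x-y‖) f(y) dy`. -/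
noncomputable def vfun (p : EuclideanSpace ℝ (Fin 3)) (η : ℝ)
    (f : EuclideanSpace ℝ (Fin 3) → ℝ) (τ : ℝ) (x : EuclideanSpace ℝ (Fin 3)) : ℝ :=
  (1 / (4 * π)) * ∫ y in ball p η, (Real.exp (-τ * ‖x - y‖) / ‖x - y‖) * f y

/-- `G(x;τ) = -(1/(4π)) ∫_B ((1+τ‖x-y‖)/‖x-y‖³) e^{-τ‖x-y‖} f(y) (x-y) dy`. -/
noncomputable def Gfun (p : EuclideanSpace ℝ (Fin 3)) (η : ℝ)
    (f : EuclideanSpace ℝ (Fin 3) → ℝ) (τ : ℝ) (x : EuclideanSpace ℝ (Fin 3)) :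
    EuclideanSpace ℝ (Fin 3) :=
  (-(1 / (4 * π))) •
    ∫ y in ball p η,
      (((1 + τ * ‖x - y‖) / ‖x - y‖ ^ 3) * Real.exp (-τ * ‖x - y‖) * f y) • (x - y)

lemma setDist_le {A S : Set (EuclideanSpace ℝ (Fin 3))} {x y : EuclideanSpace ℝ (Fin 3)}
    (hx : x ∈ A) (hy : y ∈ S) : setDist A S ≤ ‖x - y‖ := by
  refine csInf_le ⟨0, ?_⟩ ⟨x, hx, y, hy, rfl⟩
  rintro _ ⟨a, _, b, _, rfl⟩
  exact norm_nonneg _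

lemma one_div_four_pi_le_one : 1 / (4 * π) ≤ 1 := by
  rw [div_le_one (by positivity)]
  linarith [pi_gt_three]

lemma vfun_abs_le {p : EuclideanSpace ℝ (Fin 3)} {η : ℝ} {f : EuclideanSpace ℝ (Fin 3) → ℝ}
    (hf : Integrable f) {x : EuclideanSpace ℝ (Fin 3)} {d τ : ℝ} (hd : 0 < d) (hτ : 1 ≤ τ)
    (hx : ∀ y ∈ ball p η, d ≤ ‖x - y‖) :
    |vfun p η f τ x| ≤ 1 / d * Real.exp (-τ * d) * ∫ y in ball p η, |f y| := by
  have key : ‖∫ y in ball p η, (Real.exp (-τ * ‖x - y‖) / ‖x - y‖) * f y‖ ≤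
      ∫ y in ball p η, 1 / d * Real.exp (-τ * d) * |f y| := by
    refine norm_integral_le_of_norm_le (hf.abs.integrableOn.const_mul _) ?_
    refine (ae_restrict_iff' measurableSet_ball).2 (Filter.Eventually.of_forall fun y hy => ?_)
    have hr := hx y hy
    have hr0 : 0 < ‖x - y‖ := hd.trans_le hr
    rw [norm_mul, Real.norm_eq_abs, Real.norm_eq_abs, abs_of_nonneg (by positivity),
      div_eq_mul_one_div, mul_comm (Real.exp _)]
    gcongr ?_ * Real.exp ?_ * _
    · exact one_div_le_one_div_of_le hd hr
    · nlinarith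
  rw [integral_const_mul, Real.norm_eq_abs] at key
  rw [vfun, abs_mul, abs_of_nonneg (by positivity : 0 ≤ 1 / (4 * π))]
  exact (mul_le_of_le_one_left (abs_nonneg _) one_div_four_pi_le_one).trans key

lemma Gfun_norm_le {p : EuclideanSpace ℝ (Fin 3)} {η : ℝ} {f : EuclideanSpace ℝ (Fin 3) → ℝ}
    (hf : Integrable f) {x : EuclideanSpace ℝ (Fin 3)} {d τ : ℝ} (hd : 0 < d) (hτ : 1 ≤ τ)
    (hx : ∀ y ∈ ball p η, d ≤ ‖x - y‖) :
    ‖Gfun p η f τ x‖ ≤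
      τ * (1 / d ^ 2 + 1 / d) * Real.exp (-τ * d) * ∫ y in ball p η, |f y| := by
  have key : ‖∫ y in ball p η,
      (((1 + τ * ‖x - y‖) / ‖x - y‖ ^ 3) * Real.exp (-τ * ‖x - y‖) * f y) • (x - y)‖ ≤
      ∫ y in ball p η, τ * (1 / d ^ 2 + 1 / d) * Real.exp (-τ * d) * |f y| := by
    refine norm_integral_le_of_norm_le (hf.abs.integrableOn.const_mul _) ?_
    refine (ae_restrict_iff' measurableSet_ball).2 (Filter.Eventually.of_forall fun y hy => ?_)
    have hr := hx y hy
    have hr0 : 0 < ‖x - y‖ := hd.trans_le hr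
    rw [norm_smul, norm_mul, Real.norm_eq_abs, Real.norm_eq_abs, abs_of_nonneg (by positivity)]
    generalize ‖x - y‖ = r at hr hr0 ⊢
    have e : (1 + τ * r) / r ^ 3 * Real.exp (-τ * r) * |f y| * r =
        (1 / r ^ 2 + τ * (1 / r)) * Real.exp (-τ * r) * |f y| := by
      field_simp
    rw [e]
    gcongr ?_ * Real.exp ?_ * _
    · have h1 : 1 / r ≤ 1 / d := one_div_le_one_div_of_le hd hr
      have h2 : 1 / r ^ 2 ≤ 1 / d ^ 2 := one_div_le_one_div_of_le (by positivity) (by gcongr)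
      have h3 : 1 / d ^ 2 ≤ τ * (1 / d ^ 2) := le_mul_of_one_le_left (by positivity) hτ
      have h4 : τ * (1 / r) ≤ τ * (1 / d) := by gcongr
      linarith
    · nlinarith
  rw [integral_const_mul] at key
  rw [Gfun, norm_smul, norm_neg, Real.norm_eq_abs,
    abs_of_nonneg (by positivity : 0 ≤ 1 / (4 * π))]
  exact (mul_le_of_le_one_left (norm_nonneg _) one_div_four_pi_le_one).trans key

/-- No measurability or integrability of `u` is required: a non-integrable square has integral
zero by convention. -/
lemma setIntegral_sq_le {D : Set (EuclideanSpace ℝ (Fin 3))} (hD : Bornology.IsBounded D)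
    {u : EuclideanSpace ℝ (Fin 3) → ℝ} {c : ℝ}
    (h : ∀ x ∈ D, |u x| ≤ c) : ∫ x in D, u x ^ 2 ≤ c ^ 2 * volume.real D := by
  refine (Real.le_norm_self _).trans ?_
  refine norm_setIntegral_le_of_norm_le_const (μ := volume) hD.measure_lt_top fun x hx => ?_
  rw [Real.norm_eq_abs, abs_pow]
  exact pow_le_pow_left₀ (abs_nonneg _) (h x hx) 2

/-- Estimate (2.18): `∫_D ‖∇v‖² + τ² ∫_D v² = O(τ² e^{-2τ dist(D,B)})`. -/
theorem energy_upper_bound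
    (p : EuclideanSpace ℝ (Fin 3)) (η : ℝ) (hη : 0 < η)
    (f : EuclideanSpace ℝ (Fin 3) → ℝ) (hf : Integrable f)
    (hf0 : ∀ᵐ y ∂volume, y ∉ ball p η → f y = 0)
    (D : Set (EuclideanSpace ℝ (Fin 3))) (hDmeas : MeasurableSet D)
    (hDbdd : Bornology.IsBounded D)
    (hdist : 0 < setDist D (ball p η)) :
    ∃ C > (0 : ℝ), ∃ τ₀ > (0 : ℝ), ∀ τ ≥ τ₀,
      (∫ x in D, ‖Gfun p η f τ x‖ ^ 2) + τ ^ 2 * ∫ x in D, (vfun p η f τ x) ^ 2 ≤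
        C * τ ^ 2 * Real.exp (-2 * τ * setDist D (ball p η)) := by
  set d := setDist D (ball p η)
  set M := ∫ y in ball p η, |f y|
  set V := volume.real D
  have hV : 0 ≤ V := measureReal_nonneg
  -- The summand `1` keeps the constant positive when `f = 0` or `D` is null.
  refine ⟨((1 / d ^ 2 + 1 / d) ^ 2 + (1 / d) ^ 2) * M ^ 2 * V + 1, by positivity, 1, one_pos,
    fun τ hτ => ?_⟩
  have hx : ∀ x ∈ D, ∀ y ∈ ball p η, d ≤ ‖x - y‖ := fun x hx y hy => setDist_le hx hy
  have hG : ∫ x in D, ‖Gfun p η f τ x‖ ^ 2 ≤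
      (τ * (1 / d ^ 2 + 1 / d) * Real.exp (-τ * d) * M) ^ 2 * V :=
    setIntegral_sq_le hDbdd fun x hxD => by
      rw [abs_norm (Gfun p η f τ x)]
      exact Gfun_norm_le hf hdist hτ (hx x hxD)
  have hv : ∫ x in D, vfun p η f τ x ^ 2 ≤ (1 / d * Real.exp (-τ * d) * M) ^ 2 * V :=
    setIntegral_sq_le hDbdd fun x hxD => vfun_abs_le hf hdist hτ (hx x hxD)
  have hexp : Real.exp (-2 * τ * d) = Real.exp (-τ * d) ^ 2 := by
    rw [← Real.exp_nat_mul]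
    congr 1
    push_cast
    ring
  rw [hexp]
  calc _ ≤ (τ * (1 / d ^ 2 + 1 / d) * Real.exp (-τ * d) * M) ^ 2 * V +
        τ ^ 2 * ((1 / d * Real.exp (-τ * d) * M) ^ 2 * V) := by gcongr
    _ = ((1 / d ^ 2 + 1 / d) ^ 2 + (1 / d) ^ 2) * M ^ 2 * V * τ ^ 2 * Real.exp (-τ * d) ^ 2 := by
      ring
    _ ≤ _ := by
      gcongr
      linarith
end
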